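/- arXiv:1201.5055 — 3 statements merged into one kernel-verified Lean document; each statement's English description precedes it below -/
import Mathlib

section
/- Let A ∈ ℝ^{n×n} be invertible. Then A has a real square root (there exists X ∈ ℝ^{n×n} with X² = A) if and only if for every real λ < 0 and every integer k ≥ 1, the integer rank((A − λI)^{k−1}) − 2·rank((A − λI)^{k}) + rank((A − λI)^{k+1}) is even. -/
/-!
Suppose `X² = A`, let `l < 0` and `N = A - l`. The difference `rank N ^ j - rank N ^ (j + 1)` is the
dimension of `ker N ⊓ range (N ^ j)`, an `X`-invariant subspace on which `X² = l < 0`, so it is even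
(`even_rank_sub`). The second difference of ranks is a difference of two such numbers.

Conversely, view `ℝⁿ` as an `ℝ[X]`-module through `A` and split it into cyclic summands
`ℝ[X] / p ^ e` with `p` irreducible (`exists_decomposition`). Computing ranks summand by summand
shows that the second difference at `(l, k)` is the number of summands isomorphic to
`ℝ[X] / (X - l) ^ k` (`second_difference_rank_eq_card`). For `l < 0` these numbers are even by
hypothesis, so those summands can be paired into copies of `M × M`, on which `(a, b) ↦ (X b, a)` is
a square root of multiplication by `X`. For any other summand, `X` is a unit because `A` is
invertible, it is a square in the residue field `ℝ[X] / p` (either `ℂ`, or `ℝ` with `X` mapping to a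
positive number), and Newton's method lifts the root to `ℝ[X] / p ^ e` (`exists_sq_mod_pow`). The
two kinds of summands are handled by one formula in `exists_endo`.
-/

open Matrix
open Polynomial

/-! ### Square roots force even rank differences -/

/-- An invariant subspace on which `X² = c` with `c < 0` is even-dimensional: the determinant of the
restriction of `X` squares to `c ^ dim`, which is negative in odd dimension. -/
theorem even_finrank_of_sq_neg {V : Type*} [AddCommGroup V] [Module ℝ V]
    [FiniteDimensional ℝ V] (X : V →ₗ[ℝ] V) (K : Submodule ℝ V) {c : ℝ} (hc : c < 0)
    (hK : ∀ v ∈ K, X v ∈ K) (hX : ∀ v ∈ K, X (X v) = c • v) :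
    Even (Module.finrank ℝ K) := by
  have h : (X.restrict hK) * (X.restrict hK) = c • (1 : K →ₗ[ℝ] K) := by
    ext v
    simpa using hX v v.2
  have hd := congrArg LinearMap.det h
  rw [map_mul, LinearMap.det_smul, map_one, mul_one] at hd
  by_contra hodd
  rw [Nat.not_even_iff_odd] at hodd
  have := hodd.pow_neg hc
  nlinarith [mul_self_nonneg (LinearMap.det (X.restrict hK))]

/-- With `N = A - l`, rank-nullity for `N` restricted to `range (N ^ j)` shows that the drop in rank
is the dimension of `ker N ⊓ range (N ^ j)`. This subspace is `X`-invariant, and `X² = l` on it. -/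
theorem even_rank_sub {n : ℕ} {A X : Matrix (Fin n) (Fin n) ℝ} (hX : X * X = A) {l : ℝ}
    (hl : l < 0) (j : ℕ) :
    Even ((((A - l • (1 : Matrix (Fin n) (Fin n) ℝ)) ^ j).rank : ℤ)
      - (((A - l • (1 : Matrix (Fin n) (Fin n) ℝ)) ^ (j + 1)).rank : ℤ)) := by
  set N := A - l • (1 : Matrix (Fin n) (Fin n) ℝ) with hN
  have hcomm : Commute X N := by
    rw [hN, ← hX]
    exact ((Commute.refl X).mul_right (Commute.refl X)).sub_right
      ((Commute.one_right X).smul_right l)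
  set W := LinearMap.range (N ^ j).mulVecLin with hW
  set g := N.mulVecLin.domRestrict W with hg
  have hrange : LinearMap.range g = LinearMap.range (N ^ (j + 1)).mulVecLin := by
    rw [hg, LinearMap.range_domRestrict, hW, pow_succ', Matrix.mulVecLin_mul,
      LinearMap.range_comp]
  have hsum := LinearMap.finrank_range_add_finrank_ker g
  rw [hrange] at hsum
  have heven : Even (Module.finrank ℝ (LinearMap.ker g)) := by
    rw [← Submodule.finrank_map_subtype_eq W]
    refine even_finrank_of_sq_neg X.mulVecLin _ hl ?_ ?_
    · rintro _ ⟨⟨_, ⟨u, rfl⟩⟩, hv, rfl⟩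
      have hv' : N *ᵥ ((N ^ j) *ᵥ u) = 0 := hv
      refine ⟨⟨X *ᵥ ((N ^ j) *ᵥ u), ⟨X *ᵥ u, ?_⟩⟩, ?_, rfl⟩
      · simp [Matrix.mulVec_mulVec, (hcomm.pow_right j).eq]
      · change N *ᵥ (X *ᵥ ((N ^ j) *ᵥ u)) = 0
        rw [Matrix.mulVec_mulVec, ← hcomm.eq, ← Matrix.mulVec_mulVec, hv', Matrix.mulVec_zero]
    · rintro _ ⟨v, hv, rfl⟩
      have hv' : N *ᵥ (v : Fin n → ℝ) = 0 := hv
      rw [hN, Matrix.sub_mulVec, sub_eq_zero, Matrix.smul_mulVec, Matrix.one_mulVec] at hv'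
      simpa [Matrix.mulVec_mulVec, hX] using hv'
  have : ((N ^ j).rank : ℤ) - ((N ^ (j + 1)).rank : ℤ) = Module.finrank ℝ (LinearMap.ker g) := by
    rw [Matrix.rank, Matrix.rank, ← hsum]
    push_cast
    ring
  rw [this]
  exact_mod_cast heven

/-! ### Pairing off elements of even fibres -/

/-- If all fibres of `f` on `B` have even cardinality, the elements of `B` can be paired off within
the fibres: `σ` is the pairing, extended by the identity outside `B`, and `c` tells the two members
of a pair apart. -/
theorem exists_pairing {ι κ : Type*} [DecidableEq ι] [DecidableEq κ] (f : ι → κ)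
    (B : Finset ι) (hB : ∀ i ∈ B, Even (B.filter (fun j => f j = f i)).card) :
    ∃ (σ : ι → ι) (c : ι → Bool), (∀ i, σ (σ i) = i) ∧ (∀ i, f (σ i) = f i) ∧
      (∀ i ∉ B, σ i = i) ∧ (∀ i ∈ B, c (σ i) = !c i) := by
  induction B using Finset.strongInduction with
  | H B ih =>
    rcases B.eq_empty_or_nonempty with rfl | ⟨a, ha⟩
    · exact ⟨id, fun _ => true, by simp, by simp, by simp, by simp⟩
    obtain ⟨b, hb, hab⟩ : ∃ b ∈ B.filter (fun j => f j = f a), b ≠ a := by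
      by_contra! hne
      have : B.filter (fun j => f j = f a) = {a} := by
        ext x
        simp only [Finset.mem_singleton]
        exact ⟨hne x, by rintro rfl; simp [ha]⟩
      have h2 := hB a ha
      simp [this] at h2
    obtain ⟨hbB, hfb⟩ := Finset.mem_filter.1 hb
    have hpair : ({a, b} : Finset ι) ⊆ B := by
      intro x; simp only [Finset.mem_insert, Finset.mem_singleton]; rintro (rfl | rfl) <;> assumption
    obtain ⟨σ, c, h1, h2, h3, h4⟩ := ih (B \ {a, b})
      (Finset.sdiff_ssubset hpair ⟨a, by simp⟩) (by
        intro i hi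
        have hiB := (Finset.mem_sdiff.1 hi).1
        have := hB i hiB
        by_cases hfi : f a = f i
        · have hsub : ({a, b} : Finset ι) ⊆ B.filter (fun j => f j = f i) := by
            intro x; simp only [Finset.mem_insert, Finset.mem_singleton, Finset.mem_filter]
            rintro (rfl | rfl) <;> simp_all
          have heq : (B \ {a, b}).filter (fun j => f j = f i)
              = B.filter (fun j => f j = f i) \ {a, b} := by
            ext x; simp only [Finset.mem_filter, Finset.mem_sdiff]; tauto
          rw [heq, Finset.card_sdiff_of_subset hsub, Finset.card_pair hab.symm]
          exact this.tsub (by decide)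
        · have heq : (B \ {a, b}).filter (fun j => f j = f i)
              = B.filter (fun j => f j = f i) := by
            ext x; simp only [Finset.mem_filter, Finset.mem_sdiff, Finset.mem_insert,
              Finset.mem_singleton]
            refine ⟨fun h => ⟨h.1.1, h.2⟩, fun h => ⟨⟨h.1, ?_⟩, h.2⟩⟩
            rintro (rfl | rfl)
            · exact hfi h.2
            · exact hfi (hfb.symm.trans h.2)
          rwa [heq])
    have ha' : σ a = a := h3 a (by simp)
    have hb' : σ b = b := h3 b (by simp)
    have hna : ∀ i, i ≠ a → σ i ≠ a := fun i hi h => hi (by rw [← h1 i, h, ha'])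
    have hnb : ∀ i, i ≠ b → σ i ≠ b := fun i hi h => hi (by rw [← h1 i, h, hb'])
    refine ⟨fun i => if i = a then b else if i = b then a else σ i,
      fun i => if i = a then true else if i = b then false else c i, ?_, ?_, ?_, ?_⟩
    · intro i; grind
    · intro i; grind
    · intro i hi; have := h3 i; grind
    · intro i hi; have := h4 i; grind

/-! ### Primary decomposition and ranks -/

/-- The primary decomposition of the `ℝ[X]`-module defined by `A`, with the module structure unfolded:
`φ` intertwines the action of `f(A)` with multiplication by `f` on the cyclic summands. -/
theorem exists_decomposition {n : ℕ} (A : Matrix (Fin n) (Fin n) ℝ) :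
    ∃ (ι : Type) (_ : Fintype ι) (p : ι → ℝ[X]) (_ : ∀ i, Irreducible (p i)) (e : ι → ℕ)
      (φ : (Fin n → ℝ) ≃ₗ[ℝ] (∀ i, ℝ[X] ⧸ Ideal.span {p i ^ e i})),
      ∀ (f : ℝ[X]) (v : Fin n → ℝ), φ (aeval A f *ᵥ v) = f • φ v := by
  classical
  obtain ⟨ι, hι, p, hp, e, ⟨ψ⟩⟩ := Module.equiv_directSum_of_isTorsion
    (Module.AEval.isTorsion_of_finiteDimensional ℝ (Fin n → ℝ) (Matrix.toLin' A))
  let θ := ψ.trans (DirectSum.linearEquivFunOnFintype ℝ[X] ι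
    (fun i => ℝ[X] ⧸ Ideal.span {p i ^ e i}))
  refine ⟨ι, hι, p, hp, e,
    (Module.AEval.of ℝ (Fin n → ℝ) (Matrix.toLin' A)).trans (θ.restrictScalars ℝ), fun f v => ?_⟩
  have h : aeval (Matrix.toLin' A) f = Matrix.toLin' (aeval A f) := by
    have := Polynomial.aeval_algHom_apply (Matrix.toLinAlgEquiv' (R := ℝ) (n := Fin n)).toAlgHom A f
    exact this
  have h2 : aeval A f *ᵥ v = aeval (Matrix.toLin' A) f • v := by
    rw [h]; rfl
  rw [h2]
  exact (congrArg θ (Module.AEval.of_aeval_smul (Matrix.toLin' A) f v)).trans (map_smul θ f _)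


/-- Multiplication by `f` on `ℝ[X] / I`, as an `ℝ`-linear map. -/
noncomputable def mulQuot (I : Ideal ℝ[X]) (f : ℝ[X]) : (ℝ[X] ⧸ I) →ₗ[ℝ] (ℝ[X] ⧸ I) :=
  (LinearMap.lsmul ℝ[X] (ℝ[X] ⧸ I) f).restrictScalars ℝ

theorem mulQuot_apply (I : Ideal ℝ[X]) (f : ℝ[X]) (x : ℝ[X] ⧸ I) : mulQuot I f x = f • x := rfl

theorem finrank_range_mulQuot_of_coprime {I : Ideal ℝ[X]} {f g : ℝ[X]} (hg : g ∈ I)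
    (h : IsCoprime f g) :
    Module.finrank ℝ (LinearMap.range (mulQuot I f)) = Module.finrank ℝ (ℝ[X] ⧸ I) := by
  have : LinearMap.range (mulQuot I f) = ⊤ := by
    rw [LinearMap.range_eq_top]
    intro x
    obtain ⟨y, rfl⟩ := Ideal.Quotient.mk_surjective x
    obtain ⟨a, b, hab⟩ := h
    refine ⟨Ideal.Quotient.mk I (a * y), ?_⟩
    change Ideal.Quotient.mk I (f * (a * y)) = _
    rw [Ideal.Quotient.eq]
    have : f * (a * y) - y = (-(b * y)) * g := by linear_combination y * hab
    rw [this]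
    exact I.mul_mem_left _ hg
  rw [this, finrank_top]

/-- The image of multiplication by `(X - l) ^ j` on `ℝ[X] / (X - l) ^ e` is isomorphic to
`ℝ[X] / (X - l) ^ (e - j)`; the truncated subtraction covers `j ≥ e`, where the image is zero. -/
theorem finrank_range_mulQuot_pow (l : ℝ) (e j : ℕ) :
    Module.finrank ℝ (LinearMap.range (mulQuot (Ideal.span {(X - C l) ^ e}) ((X - C l) ^ j)))
      = e - j := by
  set q : ℝ[X] := X - C l with hq
  have hq0 : q ≠ 0 := X_sub_C_ne_zero l
  let m : ℝ[X] →ₗ[ℝ] (ℝ[X] ⧸ Ideal.span {q ^ e}) :=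
    (mulQuot (Ideal.span {q ^ e}) (q ^ j)) ∘ₗ
      (Ideal.Quotient.mkₐ ℝ (Ideal.span {q ^ e})).toLinearMap
  have hr : LinearMap.range m = LinearMap.range (mulQuot (Ideal.span {q ^ e}) (q ^ j)) := by
    refine LinearMap.range_comp_of_range_eq_top _ ?_
    rw [LinearMap.range_eq_top]
    exact Ideal.Quotient.mkₐ_surjective ℝ _
  have hk : LinearMap.ker m = (Ideal.span {q ^ (e - j)}).restrictScalars ℝ := by
    ext f
    change Ideal.Quotient.mk _ (q ^ j * f) = 0 ↔ f ∈ Ideal.span {q ^ (e - j)}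
    rw [Ideal.Quotient.eq_zero_iff_mem, Ideal.mem_span_singleton, Ideal.mem_span_singleton]
    rcases le_total j e with h | h
    · conv_lhs => rw [← Nat.add_sub_cancel' h, pow_add]
      exact mul_dvd_mul_iff_left (pow_ne_zero _ hq0)
    · rw [Nat.sub_eq_zero_of_le h, pow_zero]
      exact ⟨fun _ => one_dvd _, fun _ => (pow_dvd_pow q h).mul_right f⟩
  rw [← hr, ← (m.quotKerEquivRange).finrank_eq, hk]
  have := finrank_quotient_span_eq_natDegree (f := q ^ (e - j))
  rw [natDegree_pow, hq, natDegree_X_sub_C, mul_one] at this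
  exact (Submodule.Quotient.restrictScalarsEquiv ℝ _).finrank_eq.trans this

/-- A cyclic summand `ℝ[X] / p ^ e` contributes `1` to the second difference of ranks at `(l, k)` if
it is a Jordan block of size `k` for `l`, and `0` otherwise. -/
theorem second_difference {p : ℝ[X]} (hp : Irreducible p) (e : ℕ) (l : ℝ) {k : ℕ} (hk : 1 ≤ k)
    [Decidable (Ideal.span {p} = Ideal.span {X - C l} ∧ e = k)] :
    (Module.finrank ℝ (LinearMap.range (mulQuot (Ideal.span {p ^ e}) ((X - C l) ^ (k - 1)))) : ℤ)
      - 2 * Module.finrank ℝ (LinearMap.range (mulQuot (Ideal.span {p ^ e}) ((X - C l) ^ k)))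
      + Module.finrank ℝ (LinearMap.range (mulQuot (Ideal.span {p ^ e}) ((X - C l) ^ (k + 1))))
      = if Ideal.span {p} = Ideal.span {X - C l} ∧ e = k then 1 else 0 := by
  by_cases h : Ideal.span {p} = Ideal.span {X - C l}
  · have h' : Ideal.span {p ^ e} = Ideal.span {(X - C l) ^ e} := by
      rw [← Ideal.span_singleton_pow, h, Ideal.span_singleton_pow]
    rw [h']
    simp only [finrank_range_mulQuot_pow, h, true_and]
    split_ifs <;> omega
  · have hc : IsCoprime (X - C l) p := by
      rw [(irreducible_X_sub_C l).coprime_iff_not_dvd]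
      intro hd
      exact h (Ideal.span_singleton_eq_span_singleton.2
        ((irreducible_X_sub_C l).associated_of_dvd hp hd).symm)
    have := fun j => finrank_range_mulQuot_of_coprime
      (Ideal.mem_span_singleton_self (p ^ e)) (hc.pow (m := j) (n := e))
    simp only [this, h, false_and, if_false]
    ring

theorem finrank_range_eq_sum {K V ι : Type*} [Field K] [AddCommGroup V] [Module K V]
    [FiniteDimensional K V] [Fintype ι] {W : ι → Type*} [∀ i, AddCommGroup (W i)]
    [∀ i, Module K (W i)] (φ : V ≃ₗ[K] (∀ i, W i)) (T : V →ₗ[K] V) (t : ∀ i, W i →ₗ[K] W i)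
    (h : ∀ v i, φ (T v) i = t i (φ v i)) :
    Module.finrank K (LinearMap.range T) = ∑ i, Module.finrank K (LinearMap.range (t i)) := by
  have hfin : Module.Finite K (∀ i, W i) := Module.Finite.equiv φ
  have hfin' (i : ι) : Module.Finite K (W i) :=
    Module.Finite.of_surjective (LinearMap.proj (R := K) (φ := W) i)
      (LinearMap.proj_surjective i)
  rw [← Module.finrank_pi_fintype K]
  let F : (∀ i, W i) →ₗ[K] (∀ i, LinearMap.range (t i)) :=
    LinearMap.pi fun i => (t i).rangeRestrict ∘ₗ LinearMap.proj i
  have hF : Function.Surjective F := by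
    intro y
    choose x hx using fun i => (y i).2
    exact ⟨x, funext fun i => Subtype.ext (hx i)⟩
  have h1 : LinearMap.range (F ∘ₗ φ.toLinearMap) = ⊤ :=
    LinearMap.range_eq_top.2 (hF.comp φ.surjective)
  have hker : LinearMap.ker (F ∘ₗ φ.toLinearMap) = LinearMap.ker T := by
    ext v
    rw [LinearMap.mem_ker, LinearMap.mem_ker, ← φ.map_eq_zero_iff]
    simp only [funext_iff, Subtype.ext_iff, h]
    rfl
  have e1 := LinearMap.finrank_range_add_finrank_ker (F ∘ₗ φ.toLinearMap)
  have e2 := LinearMap.finrank_range_add_finrank_ker T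
  rw [h1, finrank_top, hker] at e1
  omega

theorem rank_aeval {n : ℕ} (A : Matrix (Fin n) (Fin n) ℝ) {ι : Type} [Fintype ι]
    (I : ι → Ideal ℝ[X]) (φ : (Fin n → ℝ) ≃ₗ[ℝ] (∀ i, ℝ[X] ⧸ I i))
    (hφ : ∀ (f : ℝ[X]) (v : Fin n → ℝ), φ (aeval A f *ᵥ v) = f • φ v) (f : ℝ[X]) :
    (aeval A f).rank = ∑ i, Module.finrank ℝ (LinearMap.range (mulQuot (I i) f)) :=
  finrank_range_eq_sum φ (aeval A f).mulVecLin (fun i => mulQuot (I i) f)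
    fun v i => congrFun (hφ f v) i

/-! ### Square roots of `X` in cyclic modules -/

/-- `ℝ[X] / p` embeds in `ℂ` by sending `X` to a complex root `z` of `p`. If `z` is not real, the image
is all of `ℂ`, so `X` is a square; if `z` is real, it is positive by hypothesis. -/
theorem exists_sq_mod_irreducible {p : ℝ[X]} (hp : Irreducible p) (hX : IsCoprime X p)
    (hneg : ∀ l : ℝ, l < 0 → Ideal.span {p} ≠ Ideal.span {X - C l}) :
    ∃ s : ℝ[X], p ∣ s ^ 2 - X := by
  obtain ⟨z, hz⟩ := IsAlgClosed.exists_aeval_eq_zero ℂ p (degree_pos_of_irreducible hp).ne'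
  have hdvd (f : ℝ[X]) (hf : aeval z f = 0) : p ∣ f :=
    (Dvd.intro _ (minpoly.eq_of_irreducible hp hz)).trans (minpoly.dvd ℝ z hf)
  by_cases him : z.im = 0
  · have hzr : z = (z.re : ℂ) := Complex.ext rfl (by simpa using him)
    have hd : p ∣ X - C z.re := hdvd _ (by simp [← hzr])
    rcases lt_trichotomy z.re 0 with h | h | h
    · exact absurd (Ideal.span_singleton_eq_span_singleton.2
        (hp.associated_of_dvd (irreducible_X_sub_C _) hd)) (hneg _ h)
    · rw [h, C_0, sub_zero] at hd
      exact absurd (hX.isUnit_of_dvd' hd dvd_rfl) hp.not_isUnit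
    · refine ⟨C (Real.sqrt z.re), ?_⟩
      rw [← C_pow, Real.sq_sqrt h.le, ← dvd_neg, neg_sub]
      exact hd
  · obtain ⟨w, hw⟩ := IsAlgClosed.exists_pow_nat_eq z (n := 2) (by norm_num)
    -- the real affine polynomial taking the value `w` at `z`
    refine ⟨C (w.re - w.im / z.im * z.re) + C (w.im / z.im) * X, hdvd _ ?_⟩
    have : aeval z (C (w.re - w.im / z.im * z.re) + C (w.im / z.im) * X) = w := by
      apply Complex.ext
      · simp
      · simp [him]
    rw [map_sub, map_pow, this, aeval_X, hw, sub_self]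

/-- The square root of `X` modulo `p` lifts to one modulo `p ^ e` by Newton's method, since `X` and `2`
are invertible there. -/
theorem exists_sq_mod_pow {p : ℝ[X]} (hp : Irreducible p) (e : ℕ) (hX : IsCoprime X (p ^ e))
    (hneg : ∀ l : ℝ, l < 0 → 1 ≤ e → Ideal.span {p} ≠ Ideal.span {X - C l}) :
    ∃ s : ℝ[X], s * s - X ∈ Ideal.span {p ^ e} := by
  rcases Nat.eq_zero_or_pos e with rfl | he
  · exact ⟨0, by simp⟩
  obtain ⟨s, hs⟩ := exists_sq_mod_irreducible hp
    (by rwa [IsCoprime.pow_right_iff he] at hX) (fun l hl => hneg l hl he)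
  let Q := ℝ[X] ⧸ Ideal.span {p ^ e}
  let π : ℝ[X] →+* Q := Ideal.Quotient.mk _
  have hnil : IsNilpotent (π s ^ 2 - π X) := by
    refine ⟨e, ?_⟩
    rw [← map_pow, ← map_sub, ← map_pow, Ideal.Quotient.eq_zero_iff_mem,
      Ideal.mem_span_singleton]
    exact pow_dvd_pow_of_dvd hs e
  have hXu : IsUnit (π X) := by
    obtain ⟨a, b, hab⟩ := hX
    have h := congrArg π hab
    have h0 : π (p ^ e) = 0 := Ideal.Quotient.eq_zero_iff_mem.2 (Ideal.mem_span_singleton_self _)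
    rw [map_add, map_mul, map_mul, h0, mul_zero, add_zero, map_one] at h
    exact IsUnit.of_mul_eq_one_right _ h
  have hsu : IsUnit (π s) := by
    have h := hnil.isUnit_add_left_of_commute hXu (Commute.all _ _)
    rw [add_sub_cancel] at h
    exact (isUnit_pow_iff two_ne_zero).1 h
  have h2 : IsUnit (2 : Q) := by
    have h : IsUnit (C (2 : ℝ)) := isUnit_C.2 (isUnit_iff_ne_zero.2 two_ne_zero)
    have h' := h.map π
    rwa [map_ofNat, map_ofNat] at h'
  obtain ⟨r, ⟨-, hr⟩, -⟩ := Polynomial.existsUnique_nilpotent_sub_and_aeval_eq_zero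
    (P := (X ^ 2 - C (π X) : Q[X])) (x := π s) (by simpa using hnil)
    (by simpa [one_add_one_eq_two] using h2.mul hsu)
  obtain ⟨t, rfl⟩ := Ideal.Quotient.mk_surjective r
  refine ⟨t, Ideal.Quotient.eq_zero_iff_mem.1 ?_⟩
  rw [map_sub, map_mul, ← sq]
  simpa using hr

/-- The endomorphism `x ↦ (c i • x (σ i))ᵢ` of a product of cyclic modules is a square root of
multiplication by `X` as soon as `c i * c (σ i) = X` in the `i`-th factor. -/
theorem exists_endo {ι : Type} (I : ι → Ideal ℝ[X]) (σ : ι → ι) (hσ : ∀ i, σ (σ i) = i)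
    (hI : ∀ i, I (σ i) = I i) (c : ι → ℝ[X]) (hc : ∀ i, c i * c (σ i) - X ∈ I i) :
    ∃ S : (∀ i, ℝ[X] ⧸ I i) →ₗ[ℝ] (∀ i, ℝ[X] ⧸ I i), ∀ x, S (S x) = (X : ℝ[X]) • x := by
  let S : (∀ i, ℝ[X] ⧸ I i) →ₗ[ℝ[X]] (∀ i, ℝ[X] ⧸ I i) :=
    LinearMap.pi fun i => c i • (Submodule.factor (hI i).le) ∘ₗ LinearMap.proj (σ i)
  have hS (f : ι → ℝ[X]) : S (fun i => Ideal.Quotient.mk (I i) (f i))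
      = fun i => Ideal.Quotient.mk (I i) (c i * f (σ i)) := rfl
  refine ⟨S.restrictScalars ℝ, fun x => ?_⟩
  choose f hf using fun i => Ideal.Quotient.mk_surjective (x i)
  obtain rfl : (fun i => Ideal.Quotient.mk (I i) (f i)) = x := funext hf
  rw [LinearMap.restrictScalars_apply, LinearMap.restrictScalars_apply, hS, hS]
  funext i
  change _ = Ideal.Quotient.mk (I i) (X * f i)
  rw [Ideal.Quotient.eq, hσ]
  have : c i * (c (σ i) * f i) - X * f i = f i * (c i * c (σ i) - X) := by ring
  rw [this]
  exact (I i).mul_mem_left _ (hc i)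

/-! ### Construction of the square root -/

/-- The second difference of ranks counts the Jordan blocks of size `k` for the eigenvalue `l`. -/
theorem second_difference_rank_eq_card {n : ℕ} (A : Matrix (Fin n) (Fin n) ℝ) {ι : Type} [Fintype ι]
    (p : ι → ℝ[X]) (hp : ∀ i, Irreducible (p i)) (e : ι → ℕ)
    (φ : (Fin n → ℝ) ≃ₗ[ℝ] (∀ i, ℝ[X] ⧸ Ideal.span {p i ^ e i}))
    (hφ : ∀ (f : ℝ[X]) (v : Fin n → ℝ), φ (aeval A f *ᵥ v) = f • φ v)
    (l : ℝ) {k : ℕ} (hk : 1 ≤ k)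
    [DecidablePred fun i => Ideal.span {p i} = Ideal.span {X - C l} ∧ e i = k] :
    (((A - l • (1 : Matrix (Fin n) (Fin n) ℝ)) ^ (k - 1)).rank : ℤ)
        - 2 * (((A - l • (1 : Matrix (Fin n) (Fin n) ℝ)) ^ k).rank : ℤ)
        + (((A - l • (1 : Matrix (Fin n) (Fin n) ℝ)) ^ (k + 1)).rank : ℤ)
      = (Finset.univ.filter
          fun i => Ideal.span {p i} = Ideal.span {X - C l} ∧ e i = k).card := by
  have hN (j : ℕ) : (A - l • (1 : Matrix (Fin n) (Fin n) ℝ)) ^ j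
      = aeval A ((X - C l) ^ j : ℝ[X]) := by
    rw [map_pow, map_sub, aeval_X, aeval_C, Algebra.algebraMap_eq_smul_one]
  simp only [hN, rank_aeval A _ φ hφ]
  push_cast
  rw [Finset.mul_sum, ← Finset.sum_sub_distrib, ← Finset.sum_add_distrib,
    Finset.sum_congr rfl fun i _ => second_difference (hp i) (e i) l hk, Finset.sum_boole]

theorem exists_sqrt {n : ℕ} (A : Matrix (Fin n) (Fin n) ℝ) (hA : IsUnit A.det)
    (h : ∀ l : ℝ, l < 0 → ∀ k : ℕ, 1 ≤ k →
      Even ((((A - l • (1 : Matrix (Fin n) (Fin n) ℝ)) ^ (k - 1)).rank : ℤ)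
        - 2 * (((A - l • (1 : Matrix (Fin n) (Fin n) ℝ)) ^ k).rank : ℤ)
        + (((A - l • (1 : Matrix (Fin n) (Fin n) ℝ)) ^ (k + 1)).rank : ℤ))) :
    ∃ Y : Matrix (Fin n) (Fin n) ℝ, Y * Y = A := by
  classical
  obtain ⟨ι, _, p, hp, e, φ, hφ⟩ := exists_decomposition A
  -- `X` acts invertibly because `A` does, so it is a unit modulo each `p i ^ e i`
  have hXc (i : ι) : IsCoprime X (p i ^ e i) := by
    let v := A⁻¹ *ᵥ φ.symm fun i => Ideal.Quotient.mk (Ideal.span {p i ^ e i}) 1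
    have h1 : (X : ℝ[X]) • φ v = fun i => Ideal.Quotient.mk (Ideal.span {p i ^ e i}) 1 := by
      rw [← hφ, aeval_X, Matrix.mulVec_mulVec, Matrix.mul_nonsing_inv A hA, Matrix.one_mulVec,
        φ.apply_symm_apply]
    obtain ⟨a, ha⟩ := Ideal.Quotient.mk_surjective (φ v i)
    have h2 : Ideal.Quotient.mk (Ideal.span {p i ^ e i}) (X * a)
        = Ideal.Quotient.mk (Ideal.span {p i ^ e i}) 1 := by
      rw [← congrFun h1 i, Pi.smul_apply, ← ha]
      rfl
    rw [Ideal.Quotient.eq, Ideal.mem_span_singleton] at h2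
    obtain ⟨b, hb⟩ := h2
    exact ⟨a, -b, by linear_combination hb⟩
  -- the nontrivial summands belonging to negative eigenvalues
  let B : Finset ι := Finset.univ.filter fun i =>
    ∃ l : ℝ, l < 0 ∧ 1 ≤ e i ∧ Ideal.span {p i} = Ideal.span {X - C l}
  obtain ⟨σ, c, h1, h2, h3, h4⟩ := exists_pairing
    (fun i => ((Ideal.span {p i} : Ideal ℝ[X]), e i)) B (by
      intro i hi
      obtain ⟨l, hl, hei, hpi⟩ := (Finset.mem_filter.1 hi).2
      have heq : B.filter (fun j => ((Ideal.span {p j} : Ideal ℝ[X]), e j)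
            = ((Ideal.span {p i} : Ideal ℝ[X]), e i))
          = Finset.univ.filter
            fun j => Ideal.span {p j} = Ideal.span {X - C l} ∧ e j = e i := by
        ext j
        simp only [B, Finset.mem_filter, Finset.mem_univ, true_and, Prod.mk.injEq, hpi]
        exact ⟨fun hj => hj.2, fun hj => ⟨⟨l, hl, hj.2 ▸ hei, hj.1⟩, hj⟩⟩
      have hev := h l hl (e i) hei
      rw [second_difference_rank_eq_card A p hp e φ hφ l hei] at hev
      rw [heq]
      exact_mod_cast hev)
  have hgood (i : ι) (hi : i ∉ B) : ∃ s : ℝ[X], s * s - X ∈ Ideal.span {p i ^ e i} :=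
    exists_sq_mod_pow (hp i) (e i) (hXc i) fun l hl he heq =>
      hi (Finset.mem_filter.2 ⟨Finset.mem_univ i, l, hl, he, heq⟩)
  choose! s hs using hgood
  have hσB (i : ι) (hi : i ∈ B) : σ i ∈ B := by
    by_contra hn
    have := h3 _ hn
    rw [h1] at this
    exact hn (this ▸ hi)
  obtain ⟨S, hS⟩ := exists_endo (fun i => Ideal.span {p i ^ e i}) σ h1
    (fun i => by
      have := h2 i
      simp only [Prod.mk.injEq] at this
      rw [← Ideal.span_singleton_pow, ← Ideal.span_singleton_pow, this.1, this.2])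
    -- on a pair of equal blocks the root is `(a, b) ↦ (X b, a)`
    (fun i => if i ∈ B then (if c i then X else 1) else s i)
    (fun i => by
      by_cases hi : i ∈ B
      · simp only [hi, hσB i hi, if_true, h4 i hi]
        cases c i <;> simp
      · simp only [h3 i hi, hi, if_false]
        exact hs i hi)
  let T : (Fin n → ℝ) →ₗ[ℝ] (Fin n → ℝ) := φ.symm.toLinearMap ∘ₗ S ∘ₗ φ.toLinearMap
  refine ⟨LinearMap.toMatrix' T, ?_⟩
  rw [← LinearMap.toMatrix'_comp, ← LinearMap.toMatrix'_toLin' A]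
  congr 1
  refine LinearMap.ext fun v => φ.injective ?_
  have := hφ X v
  rw [aeval_X] at this
  simp only [T, LinearMap.comp_apply, LinearEquiv.coe_coe, φ.apply_symm_apply, hS,
    Matrix.toLin'_apply, this]

theorem real_sqrt_existence_iff_even_elementary_divisors (n : ℕ)
    (A : Matrix (Fin n) (Fin n) ℝ) (hA : IsUnit A.det) :
    (∃ X : Matrix (Fin n) (Fin n) ℝ, X * X = A) ↔
    (∀ l : ℝ, l < 0 → ∀ k : ℕ, 1 ≤ k →
      Even ((((A - l • (1 : Matrix (Fin n) (Fin n) ℝ)) ^ (k - 1)).rank : ℤ)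
        - 2 * (((A - l • (1 : Matrix (Fin n) (Fin n) ℝ)) ^ k).rank : ℤ)
        + (((A - l • (1 : Matrix (Fin n) (Fin n) ℝ)) ^ (k + 1)).rank : ℤ))) := by
  refine ⟨?_, exists_sqrt A hA⟩
  rintro ⟨X, hX⟩ l hl k hk
  obtain ⟨j, rfl⟩ := Nat.exists_eq_add_of_le' hk
  -- the second difference of the ranks is a difference of two even first differences
  obtain ⟨a, ha⟩ := even_rank_sub hX hl j
  obtain ⟨b, hb⟩ := even_rank_sub hX hl (j + 1)
  rw [Nat.add_sub_cancel]
  exact ⟨a - b, by linarith⟩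
end

section
/- Let n ≥ 1 and let A ∈ ℂ^{n×n} be invertible such that every eigenvalue of A has geometric multiplicity 1, i.e., rank(A − λI) = n − 1 for every eigenvalue λ of A (so in the Jordan canonical form of A each eigenvalue appears in only one Jordan block). Then the set {X ∈ ℂ^{n×n} : X² = A} has exactly 2^s elements, where s is the number of distinct eigenvalues of A, and each such X is a polynomial in A. -/
open Matrix Polynomial

/-!
The rank hypothesis says `dim ker (A - μ) ≤ 1` for every `μ`, so the kernel of a product of `k`
linear factors in `A` has dimension at most `k` (`card_le_rank_aeval_prod_add_card`). Applied to the
minimal polynomial of `A`, whose value at `A` has kernel the whole space, this gives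
`n ≤ deg (minpoly A)`, hence `minpoly A = charpoly A` (`minpoly_eq_charpoly`).

If `X * X = A`, then `ℂ[A] ⊆ ℂ[X]`, where `ℂ[A]` has dimension `n` and `ℂ[X]` has dimension at most
`n` by Cayley–Hamilton. So the two agree and `X` is a polynomial in `A` (`sqrt_mem_polynomials`).

It remains to count the square roots of the class of the variable in `ℂ[x] / (χ)`, where `χ` is the
characteristic polynomial. Evaluation at the roots of `χ` sends such a square root to a choice of
square root of each eigenvalue. Every choice arises: interpolate it by a polynomial, which is a
square root modulo nilpotents because `χ` divides a power of any polynomial vanishing on its roots,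
and correct it by Newton iteration (`exists_sqrt_mod`). The choice determines the square root, since
`χ ∣ (p - q) * (p + q)` and `p + q` is coprime to `χ` (`sqrt_mod_unique`). As no eigenvalue is zero,
there are `2 ^ s` choices.
-/

/-- Sylvester's rank inequality for square matrices. -/
lemma rank_add_rank_le_rank_mul_add {n : ℕ} (M N : Matrix (Fin n) (Fin n) ℂ) :
    M.rank + N.rank ≤ (M * N).rank + n := by
  have hrange : LinearMap.range ((M.mulVecLin).domRestrict (LinearMap.range N.mulVecLin)) =
      LinearMap.range (M * N).mulVecLin := by
    rw [Matrix.mulVecLin_mul, LinearMap.range_comp, LinearMap.range_domRestrict]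
  have h1 := ((M.mulVecLin).domRestrict (LinearMap.range N.mulVecLin)).finrank_range_add_finrank_ker
  have h2 := M.mulVecLin.finrank_range_add_finrank_ker
  have h3 : Module.finrank ℂ
      (LinearMap.ker ((M.mulVecLin).domRestrict (LinearMap.range N.mulVecLin))) ≤
      Module.finrank ℂ (LinearMap.ker M.mulVecLin) := by
    rw [LinearMap.ker_domRestrict]
    rw [LinearEquiv.finrank_eq (Submodule.equivMapOfInjective _
      (LinearMap.range N.mulVecLin).injective_subtype _)]
    exact Submodule.finrank_mono (Submodule.map_comap_le _ _)
  rw [hrange] at h1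
  simp only [Module.finrank_fin_fun] at h2
  unfold Matrix.rank
  omega

/-- A product of linear factors in a nonderogatory matrix loses at most one unit of rank per
factor. -/
lemma card_le_rank_aeval_prod_add_card {n : ℕ} (A : Matrix (Fin n) (Fin n) ℂ)
    (hgeo : ∀ μ : ℂ, A.charpoly.IsRoot μ →
      (A - μ • (1 : Matrix (Fin n) (Fin n) ℂ)).rank = n - 1) (s : Multiset ℂ) :
    n ≤ (aeval A (s.map fun μ => X - C μ).prod).rank + s.card := by
  induction s using Multiset.induction_on with
  | empty => simp
  | cons μ s ih =>
    have hμ : n ≤ (A - μ • (1 : Matrix (Fin n) (Fin n) ℂ)).rank + 1 := by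
      by_cases h : A.charpoly.IsRoot μ
      · rw [hgeo μ h]; omega
      · rw [← Matrix.mem_spectrum_iff_isRoot_charpoly, spectrum.notMem_iff, IsUnit.sub_iff,
          Algebra.algebraMap_eq_smul_one] at h
        rw [Matrix.rank_of_isUnit _ h]
        simp
    have h := rank_add_rank_le_rank_mul_add (A - μ • (1 : Matrix (Fin n) (Fin n) ℂ))
      (aeval A (s.map fun μ => X - C μ).prod)
    have e : aeval A ((μ ::ₘ s).map fun μ => X - C μ).prod =
        (A - μ • (1 : Matrix (Fin n) (Fin n) ℂ)) * aeval A (s.map fun μ => X - C μ).prod := by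
      simp [Algebra.algebraMap_eq_smul_one]
    rw [e, Multiset.card_cons]
    omega

lemma minpoly_eq_charpoly {n : ℕ} (A : Matrix (Fin n) (Fin n) ℂ)
    (hgeo : ∀ μ : ℂ, A.charpoly.IsRoot μ →
      (A - μ • (1 : Matrix (Fin n) (Fin n) ℂ)).rank = n - 1) :
    minpoly ℂ A = A.charpoly := by
  have hm : (minpoly ℂ A).Monic := minpoly.monic (Matrix.isIntegral A)
  have h := card_le_rank_aeval_prod_add_card A hgeo (minpoly ℂ A).roots
  rw [← (IsAlgClosed.splits (minpoly ℂ A)).eq_prod_roots_of_monic hm, minpoly.aeval,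
    Matrix.rank_zero, splits_iff_card_roots.mp (IsAlgClosed.splits (minpoly ℂ A))] at h
  refine (eq_of_monic_of_dvd_of_natDegree_le hm A.charpoly_monic
    (Matrix.minpoly_dvd_charpoly A) ?_).symm
  rw [Matrix.charpoly_natDegree_eq_dim, Fintype.card_fin]
  omega

lemma sqrt_mem_polynomials {n : ℕ} (A Y : Matrix (Fin n) (Fin n) ℂ)
    (hdeg : (minpoly ℂ A).natDegree = n) (hY : Y * Y = A) :
    ∃ p : ℂ[X], Y = aeval A p := by
  let W : Submodule ℂ (Matrix (Fin n) (Fin n) ℂ) :=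
    Submodule.span ℂ (Set.range fun i : Fin n => Y ^ (i : ℕ))
  have hW : ∀ p : ℂ[X], aeval Y p ∈ W := by
    intro p
    rw [← aeval_modByMonic_eq_self_of_root (Matrix.aeval_self_charpoly Y), aeval_eq_sum_range]
    refine Submodule.sum_mem _ fun i _ => ?_
    by_cases hi : i < n
    · exact W.smul_mem _ (Submodule.subset_span ⟨⟨i, hi⟩, rfl⟩)
    · have hlt : (p %ₘ Y.charpoly).degree < i := by
        refine (degree_modByMonic_lt p Y.charpoly_monic).trans_le ?_
        rw [Matrix.charpoly_degree_eq_dim, Fintype.card_fin]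
        exact_mod_cast not_lt.mp hi
      rw [coeff_eq_zero_of_degree_lt hlt, zero_smul]
      exact W.zero_mem
  let U : Submodule ℂ (Matrix (Fin n) (Fin n) ℂ) :=
    Submodule.span ℂ (Set.range fun i : Fin (minpoly ℂ A).natDegree => A ^ (i : ℕ))
  have hUW : U ≤ W := by
    refine Submodule.span_le.mpr ?_
    rintro _ ⟨i, rfl⟩
    have := hW ((X * X) ^ (i : ℕ))
    simpa [hY] using this
  have hWdim : Module.finrank ℂ W ≤ n := by
    have := finrank_range_le_card (R := ℂ) (fun i : Fin n => Y ^ (i : ℕ))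
    rwa [Fintype.card_fin] at this
  have hUdim : Module.finrank ℂ U = n := by
    have := finrank_span_eq_card (linearIndependent_pow (K := ℂ) A)
    rw [Fintype.card_fin] at this
    exact this.trans hdeg
  have hEq : U = W := Submodule.eq_of_le_of_finrank_le hUW (by omega)
  have hYU : Y ∈ U := by
    rw [hEq]
    simpa using hW X
  have hU : U ≤ LinearMap.range (aeval A : ℂ[X] →ₐ[ℂ] _).toLinearMap := by
    refine Submodule.span_le.mpr ?_
    rintro _ ⟨i, rfl⟩
    exact ⟨X ^ (i : ℕ), by simp⟩
  obtain ⟨p, hp⟩ := hU hYU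
  exact ⟨p, hp.symm⟩

lemma dvd_pow_of_eval_eq_zero {P q : ℂ[X]} (hP : P.Monic)
    (hq : ∀ z, P.IsRoot z → q.eval z = 0) : ∃ k, P ∣ q ^ k := by
  refine ⟨P.roots.card, ?_⟩
  have h := Multiset.prod_dvd_prod_of_dvd (S := P.roots) (fun μ => X - C μ) (fun _ => q)
    fun z hz => dvd_iff_isRoot.mpr (hq z (isRoot_of_mem_roots hz))
  rwa [← (IsAlgClosed.splits P).eq_prod_roots_of_monic hP, Multiset.map_const',
    Multiset.prod_replicate] at h

lemma isCoprime_of_eval_ne_zero {P q : ℂ[X]} (hq : ∀ z, P.IsRoot z → q.eval z ≠ 0) :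
    IsCoprime P q := by
  rw [isCoprime_iff_aeval_ne_zero_of_isAlgClosed (k := ℂ) (K := ℂ)]
  intro z
  by_cases h : P.IsRoot z
  · exact Or.inr (by simpa using hq z h)
  · exact Or.inl (by simpa using h)

lemma exists_sqrt_mod {P : ℂ[X]} (hP : P.Monic) (h0 : ¬ P.IsRoot 0) (f : ℂ → ℂ)
    (hf : ∀ z, P.IsRoot z → f z ^ 2 = z) :
    ∃ p : ℂ[X], (∀ z, P.IsRoot z → p.eval z = f z) ∧ P ∣ p * p - X := by
  let q : ℂ[X] := Lagrange.interpolate P.roots.toFinset id f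
  have hq : ∀ z, P.IsRoot z → q.eval z = f z := fun z hz =>
    Lagrange.eval_interpolate_at_node f (Set.injOn_id _) (by simpa [hP.ne_zero] using hz)
  let F : (AdjoinRoot P)[X] := X ^ 2 - C (AdjoinRoot.mk P X)
  have hnil : IsNilpotent (aeval (AdjoinRoot.mk P q) F) := by
    obtain ⟨k, hk⟩ := dvd_pow_of_eval_eq_zero (q := q ^ 2 - X) hP
      fun z hz => by simp [hq z hz, hf z hz]
    refine ⟨k, ?_⟩
    rw [← AdjoinRoot.mk_eq_zero] at hk
    simpa [F] using hk
  have hunit : IsUnit (aeval (AdjoinRoot.mk P q) (derivative F)) := by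
    have hco : IsCoprime P (2 * q) := isCoprime_of_eval_ne_zero fun z hz h => by
      have h1 : f z = 0 := by simpa [hq z hz] using h
      have h2 := hf z hz
      rw [h1] at h2
      exact h0 (by simpa [← h2] using hz)
    obtain ⟨a, b, hab⟩ := hco
    refine IsUnit.of_mul_eq_one (AdjoinRoot.mk P b) ?_
    have := congrArg (AdjoinRoot.mk P) hab
    simp only [map_add, map_mul, AdjoinRoot.mk_self, mul_zero, zero_add, map_one, map_ofNat] at this
    rw [← this]
    simp [F]
    ring
  obtain ⟨r, ⟨⟨k, hk⟩, hr⟩, -⟩ := existsUnique_nilpotent_sub_and_aeval_eq_zero hnil hunit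
  obtain ⟨p, rfl⟩ := AdjoinRoot.mk_surjective r
  refine ⟨p, fun z hz => ?_, ?_⟩
  · rw [← map_sub, ← map_pow, AdjoinRoot.mk_eq_zero] at hk
    have h := hz.dvd hk
    have h' : ((q - p).eval z) ^ k = 0 := by simpa using h
    have h'' := eq_zero_of_pow_eq_zero h'
    rw [eval_sub, sub_eq_zero, hq z hz] at h''
    exact h''.symm
  · rw [← AdjoinRoot.mk_eq_zero]
    simpa [F, sq] using hr

lemma sqrt_mod_unique {P p q : ℂ[X]} (h0 : ¬ P.IsRoot 0) (hp : P ∣ p * p - X)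
    (hq : P ∣ q * q - X) (h : ∀ z, P.IsRoot z → p.eval z = q.eval z) : P ∣ p - q := by
  have hco : IsCoprime P (p + q) := isCoprime_of_eval_ne_zero fun z hz h' => by
    have h1 := hz.dvd hq
    have h2 : q.eval z = 0 := by
      rw [eval_add, h z hz, ← two_mul] at h'
      simpa using h'
    have h3 : z = 0 := by simpa [h2] using h1
    exact h0 (h3 ▸ hz)
  refine hco.dvd_of_dvd_mul_right ?_
  have := dvd_sub hp hq
  convert this using 1
  ring

theorem nonderogatory_matrix_sqrts_count (n : ℕ) (hn : 1 ≤ n)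
    (A : Matrix (Fin n) (Fin n) ℂ) (hA : IsUnit A.det)
    (hgeo : ∀ μ : ℂ, A.charpoly.IsRoot μ →
      (A - μ • (1 : Matrix (Fin n) (Fin n) ℂ)).rank = n - 1) :
    ({X : Matrix (Fin n) (Fin n) ℂ | X * X = A}).ncard =
      2 ^ A.charpoly.roots.toFinset.card ∧
    ∀ X : Matrix (Fin n) (Fin n) ℂ, X * X = A →
      ∃ p : Polynomial ℂ, X = Polynomial.aeval A p := by
  have hmin := minpoly_eq_charpoly A hgeo
  have hpoly : ∀ Y : Matrix (Fin n) (Fin n) ℂ, Y * Y = A → ∃ p : ℂ[X], Y = aeval A p :=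
    fun Y hY => sqrt_mem_polynomials A Y (by simp [hmin, Matrix.charpoly_natDegree_eq_dim]) hY
  refine ⟨?_, hpoly⟩
  set P := A.charpoly with hPdef
  have hPm : P.Monic := A.charpoly_monic
  have hzero : ∀ p : ℂ[X], aeval A p = 0 ↔ P ∣ p := fun p => by
    rw [← hmin, minpoly.dvd_iff]
  have hsqrt : ∀ p : ℂ[X], aeval A p * aeval A p = A ↔ P ∣ p * p - X := fun p => by
    rw [← hzero, map_sub, map_mul, aeval_X, sub_eq_zero]
  have h0 : ¬ P.IsRoot 0 := by
    rw [hPdef, ← Matrix.mem_spectrum_iff_isRoot_charpoly, spectrum.zero_mem_iff, not_not,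
      Matrix.isUnit_iff_isUnit_det]
    exact hA
  have hS : ∀ z, z ∈ P.roots.toFinset ↔ P.IsRoot z := fun z => by
    simp [hPm.ne_zero]
  choose c hc using fun z : ℂ => IsAlgClosed.exists_pow_nat_eq z (n := 2) two_pos
  -- The choices of a square root of each eigenvalue.
  let T : Finset (P.roots.toFinset → ℂ) := Fintype.piFinset fun z => {c z, -c z}
  have hT : ∀ f, f ∈ T ↔ ∀ z : P.roots.toFinset, f z ^ 2 = z := fun f => by
    simp only [T, Fintype.mem_piFinset, Finset.mem_insert, Finset.mem_singleton]
    refine forall_congr' fun z => ?_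
    rw [← sq_eq_sq_iff_eq_or_eq_neg, hc]
  have hTcard : T.card = 2 ^ P.roots.toFinset.card := by
    rw [Fintype.card_piFinset, Finset.prod_congr rfl (g := fun _ => 2)]
    · simp
    · intro z _
      refine Finset.card_pair fun h => ?_
      have hc0 : c z = 0 := self_eq_neg.mp h
      have hz : (z : ℂ) = 0 := by rw [← hc z, hc0]; simp
      exact h0 (hz ▸ (hS z).mp z.2)
  have hex : ∀ f : T, ∃ p : ℂ[X],
      (∀ z : P.roots.toFinset, p.eval (z : ℂ) = f.1 z) ∧ P ∣ p * p - X := fun f => by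
    classical
    obtain ⟨p, hp, hp'⟩ := exists_sqrt_mod hPm h0
      (fun z => if h : z ∈ P.roots.toFinset then f.1 ⟨z, h⟩ else 0) fun z hz => by
        rw [dif_pos ((hS z).mpr hz)]
        exact (hT f.1).mp f.2 ⟨z, (hS z).mpr hz⟩
    refine ⟨p, fun z => ?_, hp'⟩
    rw [hp z ((hS z).mp z.2), dif_pos z.2]
  choose g hg hg' using hex
  have hinj : Function.Injective fun f : T => aeval A (g f) := fun f₁ f₂ h => by
    have hd : P ∣ g f₁ - g f₂ := by
      rw [← hzero, map_sub, sub_eq_zero]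
      exact h
    refine Subtype.ext (funext fun z => ?_)
    have := ((hS z).mp z.2).dvd hd
    rw [IsRoot.def, eval_sub, sub_eq_zero, hg, hg] at this
    exact this
  have himage : {Y : Matrix (Fin n) (Fin n) ℂ | Y * Y = A} =
      Set.range fun f : T => aeval A (g f) := by
    ext Y
    constructor
    · intro hY
      obtain ⟨p, rfl⟩ := hpoly Y hY
      have hp := (hsqrt p).mp hY
      refine ⟨⟨fun z => p.eval (z : ℂ), (hT _).mpr fun z => ?_⟩, ?_⟩
      · have := ((hS z).mp z.2).dvd hp
        rw [IsRoot.def, eval_sub, sub_eq_zero, eval_mul, eval_X] at this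
        rw [sq, this]
      · change aeval A _ = _
        rw [← sub_eq_zero, ← map_sub, hzero]
        exact sqrt_mod_unique h0 (hg' _) hp fun z hz => hg _ ⟨z, (hS z).mpr hz⟩
    · rintro ⟨f, rfl⟩
      exact (hsqrt _).mpr (hg' f)
  rw [himage, ← Set.image_univ, Set.ncard_image_of_injective _ hinj, Set.ncard_univ,
    Nat.card_eq_fintype_card, Fintype.card_coe, hTcard]
end

section
/- Let n ≥ 1 and let N₁, N₂, X, Y ∈ ℝ^{n×n} satisfy N₂ᵀ = −N₂, Yᵀ = −Y, X² = N₁ and XY + YXᵀ = N₂. Then the 2n×2n block matrix Z := [[X, Y],[0, Xᵀ]] is skew-Hamiltonian and Z² = [[N₁, N₂],[0, N₁ᵀ]]. Consequently, if U ∈ ℝ^{2n×2n} is orthogonal-symplectic and W = U·[[N₁, N₂],[0, N₁ᵀ]]·Uᵀ, then UZUᵀ is a real skew-Hamiltonian square root of W. -/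
/-!
Both claims about `Z = [[X, Y], [0, Xᵀ]]` are block computations: `Z J = [[-Y, X], [-Xᵀ, 0]]` is
skew-symmetric because `Y` is, and `Z² = [[X², X Y + Y Xᵀ], [0, (X²)ᵀ]]`.
An orthogonal-symplectic `U` satisfies `Uᵀ J = J Uᵀ`, so `(U Z Uᵀ) J = U (Z J) Uᵀ` is congruent
to a skew-symmetric matrix, hence skew-symmetric; squaring commutes with the orthogonal
similarity `Z ↦ U Z Uᵀ`.
-/

open Matrix

theorem skewHamiltonian_sqrt_from_blocks (n : ℕ) (hn : 1 ≤ n)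
    (J : Matrix (Fin n ⊕ Fin n) (Fin n ⊕ Fin n) ℝ)
    (hJ : J = Matrix.fromBlocks 0 1 (-1) 0)
    (N₁ N₂ X Y : Matrix (Fin n) (Fin n) ℝ)
    (hN₂ : N₂ᵀ = -N₂) (hY : Yᵀ = -Y) (hX : X * X = N₁)
    (hXY : X * Y + Y * Xᵀ = N₂) :
    (((Matrix.fromBlocks X Y 0 Xᵀ) * J)ᵀ = -((Matrix.fromBlocks X Y 0 Xᵀ) * J)) ∧
    (Matrix.fromBlocks X Y 0 Xᵀ) * (Matrix.fromBlocks X Y 0 Xᵀ) =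
      Matrix.fromBlocks N₁ N₂ 0 N₁ᵀ ∧
    ∀ U : Matrix (Fin n ⊕ Fin n) (Fin n ⊕ Fin n) ℝ,
      Uᵀ * U = 1 → U * J * Uᵀ = J →
      ∀ W : Matrix (Fin n ⊕ Fin n) (Fin n ⊕ Fin n) ℝ,
        W = U * Matrix.fromBlocks N₁ N₂ 0 N₁ᵀ * Uᵀ →
        (U * Matrix.fromBlocks X Y 0 Xᵀ * Uᵀ) *
          (U * Matrix.fromBlocks X Y 0 Xᵀ * Uᵀ) = W ∧
        ((U * Matrix.fromBlocks X Y 0 Xᵀ * Uᵀ) * J)ᵀ =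
          -((U * Matrix.fromBlocks X Y 0 Xᵀ * Uᵀ) * J) := by
  set Z := Matrix.fromBlocks X Y 0 Xᵀ with hZ
  have hskew : (Z * J)ᵀ = -(Z * J) := by
    rw [hZ, hJ]
    simp [Matrix.fromBlocks_multiply, Matrix.fromBlocks_transpose, Matrix.fromBlocks_neg, hY]
  have hsq : Z * Z = Matrix.fromBlocks N₁ N₂ 0 N₁ᵀ := by
    rw [hZ, ← hX, ← hXY]
    simp [Matrix.fromBlocks_multiply]
  refine ⟨hskew, hsq, ?_⟩
  intro U hU hUJ W hW
  refine ⟨?_, ?_⟩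
  · calc U * Z * Uᵀ * (U * Z * Uᵀ) = U * Z * (Uᵀ * U) * Z * Uᵀ := by
          simp only [Matrix.mul_assoc]
      _ = U * (Z * Z) * Uᵀ := by rw [hU]; simp only [Matrix.mul_assoc, Matrix.one_mul]
      _ = W := by rw [hsq, hW]
  · have hcomm : Uᵀ * J = J * Uᵀ := by
      calc Uᵀ * J = Uᵀ * (U * J * Uᵀ) := by rw [hUJ]
        _ = (Uᵀ * U) * J * Uᵀ := by simp only [Matrix.mul_assoc]
        _ = J * Uᵀ := by rw [hU, Matrix.one_mul]
    have hcongr : U * Z * Uᵀ * J = U * (Z * J) * Uᵀ := by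
      rw [Matrix.mul_assoc (U * Z), hcomm]
      simp only [Matrix.mul_assoc]
    rw [hcongr, Matrix.transpose_mul, Matrix.transpose_mul, hskew, Matrix.transpose_transpose]
    simp only [Matrix.mul_neg, Matrix.neg_mul, Matrix.mul_assoc]
end
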